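/- Let R be the free associative algebra of rank r > 1 over a field, with filtration R(n) and homogeneous components R_n (span of monomials of degree n). Let M = uR be a cyclic R-module such that dim(uR(n))/rⁿ → 0, and let N ≤ M be a submodule such that for every m, the finitely generated submodule (uR(m) ∩ N)·R also satisfies dim((uR(m) ∩ N)·R(n))/rⁿ → 0 as n → ∞, and dim((uR(n)+N)/N)/rⁿ → 0. Then dim(uR(t))/r^t → 0. Equivalently: if neither N nor M/N has maximal growth, then M does not have maximal growth. -/

import Mathlib

open Module Filter

noncomputable section

/-- The `n`-th term of the standard filtration of the free associative algebra. -/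
def freeAlgFil (Φ : Type*) [Field Φ] (r n : ℕ) : Submodule Φ (FreeAlgebra Φ (Fin r)) :=
  Submodule.span Φ
    {x | ∃ w : List (Fin r), w.length ≤ n ∧ x = (w.map (FreeAlgebra.ι Φ)).prod}

/-- The ball `u·R(n)` of radius `n` in the cyclic module generated by `u`. -/
def cycBall (Φ : Type*) [Field Φ] (r : ℕ) {M : Type*} [AddCommGroup M]
    [Module (FreeAlgebra Φ (Fin r)) M] [Module Φ M]
    [IsScalarTower Φ (FreeAlgebra Φ (Fin r)) M] (u : M) (n : ℕ) : Submodule Φ M :=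
  Submodule.span Φ ((fun p : FreeAlgebra Φ (Fin r) => p • u) '' (freeAlgFil Φ r n))

/-- The action of the free algebra on a module, as a bilinear map over the base field. -/
def freeAlgAct (Φ : Type*) [Field Φ] (r : ℕ) (M : Type*) [AddCommGroup M]
    [Module (FreeAlgebra Φ (Fin r)) M] [Module Φ M]
    [IsScalarTower Φ (FreeAlgebra Φ (Fin r)) M] :
    FreeAlgebra Φ (Fin r) →ₗ[Φ] M →ₗ[Φ] M :=
  (Algebra.lsmul Φ Φ M).toLinearMap

theorem freeAlgFil_eq_span_range (Φ : Type*) [Field Φ] (r n : ℕ) :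
    freeAlgFil Φ r n = Submodule.span Φ (Set.range
      (fun w : Σ j : Fin (n + 1), (Fin j → Fin r) =>
        ((List.ofFn w.2).map (FreeAlgebra.ι Φ)).prod)) := by
  unfold freeAlgFil
  congr 1
  ext x
  constructor
  · rintro ⟨w, hw, rfl⟩
    exact ⟨⟨⟨w.length, Nat.lt_succ_of_le hw⟩, w.get⟩, by simp⟩
  · rintro ⟨⟨j, w⟩, rfl⟩
    exact ⟨List.ofFn w, by simpa using Nat.le_of_lt_succ j.2, rfl⟩

instance finiteDimensional_freeAlgFil (Φ : Type*) [Field Φ] (r n : ℕ) :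
    FiniteDimensional Φ (freeAlgFil Φ r n) := by
  rw [freeAlgFil_eq_span_range]
  exact FiniteDimensional.span_of_finite Φ (Set.finite_range _)

theorem finrank_freeAlgFil_le (Φ : Type*) [Field Φ] {r : ℕ} (hr : 1 < r) (n : ℕ) :
    finrank Φ (freeAlgFil Φ r n) ≤ 2 * r ^ n := by
  have hsum : ∑ j ∈ Finset.range (n + 1), r ^ j ≤ 2 * r ^ n := by
    induction n with
    | zero => simp
    | succ n ih =>
      rw [Finset.sum_range_succ, pow_succ]
      have := Nat.mul_le_mul_left (r ^ n) (show 2 ≤ r from hr)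
      lia
  rw [freeAlgFil_eq_span_range]
  refine (finrank_range_le_card _).trans (le_of_eq_of_le ?_ hsum)
  simp [Fintype.card_sigma, Finset.sum_range]

section

variable {Φ : Type*} [Field Φ] {r : ℕ} {M : Type*} [AddCommGroup M]
  [Module (FreeAlgebra Φ (Fin r)) M] [Module Φ M]
  [IsScalarTower Φ (FreeAlgebra Φ (Fin r)) M]

theorem cycBall_eq_map (u : M) (n : ℕ) :
    cycBall Φ r u n = (freeAlgFil Φ r n).map ((freeAlgAct Φ r M).flip u) := by
  rw [← Submodule.span_eq ((freeAlgFil Φ r n).map _)]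
  rfl

instance finiteDimensional_cycBall (u : M) (n : ℕ) :
    FiniteDimensional Φ (cycBall Φ r u n) := by
  rw [cycBall_eq_map]
  infer_instance

theorem cycBall_add_le (u : M) (k m : ℕ) :
    cycBall Φ r u (m + k) ≤
      Submodule.map₂ (freeAlgAct Φ r M) (freeAlgFil Φ r k) (cycBall Φ r u m) := by
  rw [cycBall_eq_map, Submodule.map_le_iff_le_comap]
  refine Submodule.span_le.2 ?_
  rintro _ ⟨w, hw, rfl⟩
  have hsplit : (freeAlgAct Φ r M).flip u (w.map (FreeAlgebra.ι Φ)).prod =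
      freeAlgAct Φ r M ((w.take k).map (FreeAlgebra.ι Φ)).prod
        (((w.drop k).map (FreeAlgebra.ι Φ)).prod • u) := by
    conv_lhs => rw [← List.take_append_drop k w, List.map_append, List.prod_append]
    exact mul_smul _ _ _
  rw [SetLike.mem_coe, Submodule.mem_comap, hsplit]
  exact Submodule.apply_mem_map₂ _
    (Submodule.subset_span ⟨_, by simp, rfl⟩)
    (Submodule.subset_span
      ⟨_, Submodule.subset_span ⟨w.drop k, by rw [List.length_drop]; lia, rfl⟩, rfl⟩)

end

theorem finrank_map₂_le {K V W X : Type*} [Field K] [AddCommGroup V] [Module K V]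
    [AddCommGroup W] [Module K W] [AddCommGroup X] [Module K X] (f : V →ₗ[K] W →ₗ[K] X)
    (p : Submodule K V) (q : Submodule K W) [FiniteDimensional K p] [FiniteDimensional K q] :
    finrank K (Submodule.map₂ f p q) ≤ finrank K p * finrank K q := by
  rw [TensorProduct.map₂_eq_range_lift_comp_mapIncl, ← finrank_tensorProduct]
  exact LinearMap.finrank_range_le _

/-- A finite-dimensional subspace is spanned by its intersection with the kernel of a linear map
together with a subspace whose dimension is at most that of the image. -/
theorem exists_inf_ker_sup_eq {K V W : Type*} [Field K] [AddCommGroup V] [Module K V]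
    [AddCommGroup W] [Module K W] (f : V →ₗ[K] W) (p : Submodule K V) [FiniteDimensional K p] :
    ∃ q ≤ p, (p ⊓ LinearMap.ker f) ⊔ q = p ∧ finrank K q ≤ finrank K (p.map f) := by
  obtain ⟨q, hdisj, hsup⟩ :=
    IsModularLattice.exists_disjoint_and_sup_eq (inf_le_left : p ⊓ LinearMap.ker f ≤ p)
  have hqp : q ≤ p := hsup ▸ le_sup_right
  refine ⟨q, hqp, hsup, ?_⟩
  have hinj : Function.Injective (f.domRestrict q) := by
    rw [← LinearMap.ker_eq_bot, LinearMap.ker_eq_bot']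
    intro x hx
    have hx0 := (Submodule.disjoint_def.1 hdisj) x ⟨hqp x.2, hx⟩ x.2
    exact Subtype.ext hx0
  rw [← LinearMap.finrank_range_of_inj hinj, LinearMap.range_domRestrict]
  exact Submodule.finrank_mono (Submodule.map_mono hqp)

theorem finrank_cycBall_add_le {Φ : Type*} [Field Φ] {r : ℕ} (hr : 1 < r)
    {M : Type*} [AddCommGroup M] [Module (FreeAlgebra Φ (Fin r)) M] [Module Φ M]
    [IsScalarTower Φ (FreeAlgebra Φ (Fin r)) M]
    (u : M) (N : Submodule (FreeAlgebra Φ (Fin r)) M) (m k : ℕ) :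
    finrank Φ (cycBall Φ r u (m + k)) ≤
      finrank Φ (Submodule.span Φ
        {y : M | ∃ p ∈ freeAlgFil Φ r k,
          ∃ x ∈ (cycBall Φ r u m ⊓ N.restrictScalars Φ : Submodule Φ M), y = p • x}) +
      2 * r ^ k *
        finrank Φ (Submodule.span Φ (N.mkQ '' (cycBall Φ r u m : Set M))) := by
  have hspan : Submodule.span Φ
        {y : M | ∃ p ∈ freeAlgFil Φ r k,
          ∃ x ∈ (cycBall Φ r u m ⊓ N.restrictScalars Φ : Submodule Φ M), y = p • x} =
      Submodule.map₂ (freeAlgAct Φ r M) (freeAlgFil Φ r k)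
        (cycBall Φ r u m ⊓ N.restrictScalars Φ) := by
    rw [Submodule.map₂_eq_span_image2]
    congr 1
    ext y
    simp only [Set.mem_image2, Set.mem_ofPred_eq, SetLike.mem_coe, eq_comm (a := y)]
    rfl
  have hmap : Submodule.span Φ (N.mkQ '' (cycBall Φ r u m : Set M)) =
      (cycBall Φ r u m).map (N.mkQ.restrictScalars Φ) := by
    rw [← Submodule.span_eq ((cycBall Φ r u m).map _)]
    rfl
  have hker : LinearMap.ker (N.mkQ.restrictScalars Φ) = N.restrictScalars Φ := by
    ext x
    simp
  obtain ⟨W, hW, hsup, hfin⟩ :=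
    exists_inf_ker_sup_eq (N.mkQ.restrictScalars Φ) (cycBall Φ r u m)
  have := Submodule.finiteDimensional_of_le hW
  rw [hker] at hsup
  have hle := cycBall_add_le (Φ := Φ) (r := r) u k m
  rw [← hsup, Submodule.map₂_sup_right] at hle
  have : FiniteDimensional Φ
      ↥(cycBall Φ r u m ⊓ N.restrictScalars Φ : Submodule Φ M) :=
    Submodule.finiteDimensional_of_le inf_le_left
  have hfg (q : Submodule Φ M) [FiniteDimensional Φ q] :
      FiniteDimensional Φ (Submodule.map₂ (freeAlgAct Φ r M) (freeAlgFil Φ r k) q) :=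
    Module.Finite.iff_fg.2
      (Submodule.FG.map₂ _ (Module.Finite.iff_fg.1 inferInstance)
        (Module.Finite.iff_fg.1 inferInstance))
  have := hfg (cycBall Φ r u m ⊓ N.restrictScalars Φ)
  have := hfg W
  rw [hspan, hmap]
  calc _ ≤ _ := Submodule.finrank_mono hle
    _ ≤ _ := Submodule.finrank_add_le_finrank_add_finrank _ _
    _ ≤ _ := Nat.add_le_add_left ((finrank_map₂_le _ _ _).trans
      (Nat.mul_le_mul (finrank_freeAlgFil_le Φ hr k) hfin)) _

/-- If `M = uR` is a cyclic module over the free associative algebra of rank `r > 1` and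
`N ≤ M` is a submodule such that neither `N` nor `M/N` has maximal growth (every finitely
generated submodule `(uR(m) ∩ N)·R` of `N` has `dim/rⁿ → 0`, and the quotient growth
`dim((uR(n)+N)/N)/rⁿ → 0`), then `M` does not have maximal growth: `dim uR(t)/r^t → 0`. -/
theorem not_maximal_of_extension (Φ : Type*) [Field Φ] (r : ℕ) (hr : 1 < r)
    (M : Type*) [AddCommGroup M] [Module (FreeAlgebra Φ (Fin r)) M] [Module Φ M]
    [IsScalarTower Φ (FreeAlgebra Φ (Fin r)) M]
    (u : M) (hcyc : Submodule.span (FreeAlgebra Φ (Fin r)) {u} = ⊤)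
    (N : Submodule (FreeAlgebra Φ (Fin r)) M)
    (hN : ∀ m : ℕ, Tendsto (fun n : ℕ =>
      (finrank Φ (Submodule.span Φ
        {y : M | ∃ p ∈ freeAlgFil Φ r n,
          ∃ x ∈ (cycBall Φ r u m ⊓ N.restrictScalars Φ : Submodule Φ M), y = p • x}) : ℝ)
        / (r : ℝ) ^ n) atTop (nhds 0))
    (hQ : Tendsto (fun n : ℕ =>
      (finrank Φ (Submodule.span Φ (N.mkQ '' (cycBall Φ r u n : Set M))) : ℝ)
        / (r : ℝ) ^ n) atTop (nhds 0)) :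
    Tendsto (fun t : ℕ => (finrank Φ (cycBall Φ r u t) : ℝ) / (r : ℝ) ^ t)
      atTop (nhds 0) := by
  have hr0 : (0 : ℝ) < r := by exact_mod_cast (zero_lt_one.trans hr)
  have hr1 : (1 : ℝ) ≤ r := by exact_mod_cast hr.le
  refine tendsto_order.2 ⟨fun a ha => Eventually.of_forall fun t => ha.trans_le (by positivity),
    fun ε hε => ?_⟩
  obtain ⟨m, hm⟩ := (hQ.eventually_lt_const (show 0 < ε / 4 by positivity)).exists
  obtain ⟨K, hK⟩ := eventually_atTop.1
    ((hN m).eventually_lt_const (show 0 < ε / 2 by positivity))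
  filter_upwards [eventually_ge_atTop (m + K)] with t ht
  obtain ⟨k, rfl⟩ := Nat.exists_eq_add_of_le (le_of_add_le_left ht)
  have hk := hK k (by lia)
  have hdim : (finrank Φ (cycBall Φ r u (m + k)) : ℝ) ≤ _ :=
    Nat.cast_le.2 (finrank_cycBall_add_le hr u N m k)
  push_cast at hdim
  rw [div_lt_iff₀ (by positivity)] at hm hk ⊢
  have hkm : (r : ℝ) ^ k ≤ r ^ (m + k) := pow_le_pow_right₀ hr1 (Nat.le_add_left k m)
  have hpos : (0 : ℝ) < r ^ k := by positivity
  have hmul := mul_lt_mul_of_pos_left hm hpos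
  rw [pow_add] at hkm ⊢
  nlinarith

end
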